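/- Let f : ℝ^n → ℝ^r be a smooth function on a neighborhood of a closed ball B̄(0,R), vanishing transversally, with zero set Z = f^{−1}(0) a compact subset of the open ball B(0,R). Then there exists ε > 0 such that any smooth function g with ‖g − f‖_{C^1(B̄(0,R))} < ε also vanishes transversally on B(0,R) and its zero set in B(0,R) is diffeomorphic to Z. -/

import Mathlib

open Metric Set

/-!
Near the zero set `Z` of `f` the equation `f (x + H (x, v)) = f x + v` has a smooth solution `H`
with `H (x, 0) = 0`: if `D f x ∘ A x` is invertible for `x ∈ Z`, the map
`(x, v) ↦ (x, f (x + A x v) - f x)` has invertible derivative along the compact set `Z × {0}` and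
restricts there to the inclusion, hence it is a diffeomorphism near `Z × {0}`. With a cutoff `χ`
equal to `1` near `Z`, the map `ψ x = x + χ x • H (x, g x - f x)` satisfies `f ∘ ψ = g` near `Z`
and is `C¹`-close to the identity when `g` is `C¹`-close to `f`, so it is a diffeomorphism of the
whole space. All zeros of `g` lie near `Z`, so `ψ` carries them onto `Z`, and the transversality
of `g` is read off from `g = f ∘ ψ` by the chain rule.
-/

open Filter Function Topology

open scoped NNReal

section Calculus

variable {𝕜 E F G : Type*} [NontriviallyNormedField 𝕜] [NormedAddCommGroup E] [NormedSpace 𝕜 E]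
  [NormedAddCommGroup F] [NormedSpace 𝕜 F] [NormedAddCommGroup G] [NormedSpace 𝕜 G]

theorem isInvertible_of_norm_sub_id_lt_one [CompleteSpace E] {L : E →L[𝕜] E}
    (hL : ‖L - .id 𝕜 E‖ < 1) : L.IsInvertible := by
  have hunit : IsUnit L := by
    simpa [ContinuousLinearMap.one_def] using
      isUnit_one_sub_of_norm_lt_one (x := .id 𝕜 E - L) (by rwa [norm_sub_rev])
  obtain ⟨u, rfl⟩ := hunit
  exact ⟨ContinuousLinearEquiv.unitsEquiv 𝕜 E u, rfl⟩

theorem surjective_fderiv_of_comp_homeomorph_eventuallyEq {f : G → F} {g : E → F} {ψ : E ≃ₜ G}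
    {x : E} (hg : DifferentiableAt 𝕜 g x) (hψ : DifferentiableAt 𝕜 ψ.symm (ψ x))
    (hfg : f ∘ ψ =ᶠ[𝓝 x] g) (hf : Surjective (fderiv 𝕜 f (ψ x))) :
    Surjective (fderiv 𝕜 g x) := by
  have htendsto : Tendsto ψ.symm (𝓝 (ψ x)) (𝓝 x) := by
    simpa using ψ.symm.continuous.tendsto (ψ x)
  have hgf : g ∘ ψ.symm =ᶠ[𝓝 (ψ x)] f := by
    filter_upwards [htendsto.eventually hfg] with y hy
    simpa using hy.symm
  have hchain := fderiv_comp (ψ x) (by simpa using hg : DifferentiableAt 𝕜 g (ψ.symm (ψ x))) hψ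
  rw [← hgf.fderiv_eq, hchain, ψ.symm_apply_apply] at hf
  exact .of_comp hf

theorem exists_homeomorph_id_add_of_lipschitzWith [CompleteSpace E] {P : E → E} {n : WithTop ℕ∞}
    {c : ℝ≥0} (hP : ContDiff 𝕜 n P) (hn : n ≠ 0) (hlip : LipschitzWith c P) (hc : c < 1) :
    ∃ ψ : E ≃ₜ E, (∀ x, ψ x = x + P x) ∧ ContDiff 𝕜 n ψ ∧ ContDiff 𝕜 n ψ.symm := by
  have happrox : ApproximatesLinearOn (fun x ↦ x + P x)
      (ContinuousLinearEquiv.refl 𝕜 E : E →L[𝕜] E) univ c := by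
    rw [ApproximatesLinearOn.approximatesLinearOn_iff_lipschitzOnWith, lipschitzOnWith_univ]
    convert hlip using 1
    ext x
    simp
  have hcontr : Subsingleton E ∨
      c < ‖((ContinuousLinearEquiv.refl 𝕜 E).symm : E →L[𝕜] E)‖₊⁻¹ := by
    rcases subsingleton_or_nontrivial E with hE | hE
    · exact .inl hE
    · exact .inr (by simpa using hc)
  have hderiv (x : E) : ∃ e : E ≃L[𝕜] E, HasFDerivAt (fun x ↦ x + P x) (e : E →L[𝕜] E) x := by
    obtain ⟨e, he⟩ := isInvertible_of_norm_sub_id_lt_one (L := .id 𝕜 E + fderiv 𝕜 P x) <| by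
      rw [add_sub_cancel_left]
      exact (norm_fderiv_le_of_lipschitz 𝕜 hlip).trans_lt hc
    exact ⟨e, he ▸ (hasFDerivAt_id x).add (hP.differentiable hn x).hasFDerivAt⟩
  choose e he using hderiv
  have hψ : ContDiff 𝕜 n fun x ↦ x + P x := contDiff_id.add hP
  exact ⟨happrox.toHomeomorph _ hcontr, fun _ ↦ rfl, hψ, Homeomorph.contDiff_symm _ he hψ⟩

theorem hasFDerivAt_comp_graph {T : E × F → G} {h : E → F} {L : E →L[𝕜] F} {x : E}
    (hT : DifferentiableAt 𝕜 T (x, h x)) (hh : HasFDerivAt h L x) :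
    HasFDerivAt (fun y ↦ T (y, h y)) (fderiv 𝕜 T (x, h x) ∘L .prod (.id 𝕜 E) L) x :=
  hT.hasFDerivAt.comp x ((hasFDerivAt_id x).prodMk hh)

theorem eventually_norm_comp_graph_lt {T : E × F → G} {x : E} (hT : ContDiffAt 𝕜 1 T (x, 0))
    (hT0 : ∀ᶠ y in 𝓝 x, T (y, 0) = 0) {δ : ℝ} (hδ : 0 < δ) :
    ∀ᶠ q : (F × (E →L[𝕜] F)) × E in 𝓝 (0, x), ‖T (q.2, q.1.1)‖ < δ ∧
      ‖fderiv 𝕜 T (q.2, q.1.1) ∘L .prod (.id 𝕜 E) q.1.2‖ < δ := by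
  have hbase : Tendsto (fun q : (F × (E →L[𝕜] F)) × E ↦ (q.2, q.1.1)) (𝓝 (0, x)) (𝓝 (x, 0)) :=
    Continuous.tendsto (by fun_prop) _
  have hval : Tendsto (fun q : (F × (E →L[𝕜] F)) × E ↦ ‖T (q.2, q.1.1)‖) (𝓝 (0, x)) (𝓝 0) := by
    simpa [hT0.self_of_nhds] using (hT.continuousAt.tendsto.comp hbase).norm
  have hderiv0 : fderiv 𝕜 T (x, 0) ∘L .prod (.id 𝕜 E) 0 = 0 :=
    (hasFDerivAt_comp_graph (hT.differentiableAt one_ne_zero) (hasFDerivAt_const 0 x)).unique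
      ((hasFDerivAt_const 0 x).congr_of_eventuallyEq hT0)
  have hder : Tendsto (fun q : (F × (E →L[𝕜] F)) × E ↦
      ‖fderiv 𝕜 T (q.2, q.1.1) ∘L .prod (.id 𝕜 E) q.1.2‖) (𝓝 (0, x)) (𝓝 0) := by
    have hDT : ContinuousAt (fun q : (F × (E →L[𝕜] F)) × E ↦ fderiv 𝕜 T (q.2, q.1.1)) (0, x) :=
      (hT.fderiv_right (m := 0) (by simp)).continuousAt.tendsto.comp hbase
    have hgraph : ContinuousAt (fun q : (F × (E →L[𝕜] F)) × E ↦
        (ContinuousLinearMap.id 𝕜 E).prod q.1.2) (0, x) := by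
      have hsplit (L : E →L[𝕜] F) :
          (ContinuousLinearMap.id 𝕜 E).prod L = .inl 𝕜 E F + .inr 𝕜 E F ∘L L := by
        ext <;> simp
      simp only [hsplit]
      fun_prop
    simpa [ContinuousAt, hderiv0] using (hDT.clm_comp hgraph).norm
  exact (hval.eventually_lt_const hδ).and (hder.eventually_lt_const hδ)

theorem exists_forall_norm_comp_graph_lt {T : E × F → G} {V : Set (E × F)} {K : Set E}
    (hT : ContDiffOn 𝕜 1 T V) (hV : IsOpen V) (hT0 : ∀ x, (x, 0) ∈ V → T (x, 0) = 0)
    (hK : IsCompact K) (hKV : ∀ x ∈ K, (x, 0) ∈ V) {δ : ℝ} (hδ : 0 < δ) :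
    ∃ ε > 0, ∀ h : E → F, ∀ x ∈ K, DifferentiableAt 𝕜 h x → ‖h x‖ + ‖fderiv 𝕜 h x‖ < ε →
      (x, h x) ∈ V ∧ ‖T (x, h x)‖ < δ ∧ ‖fderiv 𝕜 (fun y ↦ T (y, h y)) x‖ < δ := by
  have hTat {p : E × F} (hp : p ∈ V) : ContDiffAt 𝕜 1 T p := hT.contDiffAt (hV.mem_nhds hp)
  have hjet : ∀ᶠ j : F × (E →L[𝕜] F) in 𝓝 0, ∀ x ∈ K, (x, j.1) ∈ V ∧ ‖T (x, j.1)‖ < δ ∧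
      ‖fderiv 𝕜 T (x, j.1) ∘L .prod (.id 𝕜 E) j.2‖ < δ := by
    refine hK.eventually_forall_of_forall_eventually fun x hx ↦ .and ?_ ?_
    · have hbase : Continuous fun q : (F × (E →L[𝕜] F)) × E ↦ (q.2, q.1.1) := by fun_prop
      exact hbase.continuousAt.eventually_mem (hV.mem_nhds (hKV x hx))
    · refine eventually_norm_comp_graph_lt (hTat (hKV x hx)) ?_ hδ
      filter_upwards [(Continuous.prodMk_left (0 : F)).continuousAt.eventually_mem
        (hV.mem_nhds (hKV x hx))] with y hy using hT0 y hy
  obtain ⟨ε, hε, hball⟩ := Metric.eventually_nhds_iff.1 hjet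
  refine ⟨ε, hε, fun h x hx hh hlt ↦ ?_⟩
  have hdist : dist (h x, fderiv 𝕜 h x) 0 < ε := by
    rw [dist_zero_right]
    exact (max_le_add_of_nonneg (norm_nonneg _) (norm_nonneg _)).trans_lt hlt
  obtain ⟨hmem, hval, hder⟩ := hball hdist x hx
  have hchain := hasFDerivAt_comp_graph ((hTat hmem).differentiableAt one_ne_zero) hh.hasFDerivAt
  exact ⟨hmem, hval, hchain.fderiv ▸ hder⟩

theorem isInvertible_fderiv_shear {f : E → F} {A : E → F →L[𝕜] E} {x : E}
    (hf : DifferentiableAt 𝕜 f x) (hA : DifferentiableAt 𝕜 A x)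
    (hinv : (fderiv 𝕜 f x ∘L A x).IsInvertible) :
    (fderiv 𝕜 (fun p : E × F ↦ (p.1, f (p.1 + A p.1 p.2) - f p.1)) (x, 0)).IsInvertible := by
  have hstep := (hasFDerivAt_fst (𝕜 := 𝕜) (p := (x, (0 : F)))).add <|
    HasFDerivAt.clm_apply (hA.hasFDerivAt.comp (x, (0 : F)) hasFDerivAt_fst) hasFDerivAt_snd
  have hf' : HasFDerivAt f (fderiv 𝕜 f x) (x + A x 0) := by simpa using hf.hasFDerivAt
  have hder := (hasFDerivAt_fst (𝕜 := 𝕜) (p := (x, (0 : F)))).prodMk <|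
    (hf'.comp (x, (0 : F)) hstep).sub (hf.hasFDerivAt.comp (x, (0 : F)) hasFDerivAt_fst)
  obtain ⟨e, he⟩ := hinv
  refine ⟨(ContinuousLinearEquiv.refl 𝕜 E).prodCongr e, ?_⟩
  rw [ContinuousLinearEquiv.coe_prodCongr, he]
  refine .trans ?_ hder.fderiv.symm
  ext <;> simp

end Calculus

theorem exists_pos_forall_mem_of_norm_lt {X Y : Type*} [TopologicalSpace X]
    [NormedAddCommGroup Y] {f : X → Y} {K U : Set X} (hK : IsCompact K) (hf : ContinuousOn f K)
    (hU : IsOpen U) (hKU : ∀ x ∈ K, f x = 0 → x ∈ U) :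
    ∃ c > 0, ∀ x ∈ K, ‖f x‖ < c → x ∈ U := by
  have hclosed : IsClosed (f '' (K \ U)) :=
    ((hK.diff hU).image_of_continuousOn (hf.mono sdiff_subset)).isClosed
  have hzero : (0 : Y) ∉ f '' (K \ U) := by
    rintro ⟨x, ⟨hxK, hxU⟩, hfx⟩
    exact hxU (hKU x hxK hfx)
  obtain ⟨c, hc, hball⟩ := Metric.isOpen_iff.1 hclosed.isOpen_compl 0 hzero
  refine ⟨c, hc, fun x hx hlt ↦ ?_⟩
  by_contra hxU
  exact hball (mem_ball_zero_iff.2 hlt) ⟨x, ⟨hx, hxU⟩, rfl⟩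

theorem image_setOf_eq_zero_of_dist_lt {X Y : Type*} [PseudoMetricSpace X] [Zero Y]
    {f g : X → Y} (ψ : X ≃ X) {B N : Set X} {δ : ℝ} (hψ : ∀ x, dist (ψ x) x < δ)
    (hfg : ∀ x ∈ N, f (ψ x) = g x)
    (hsub : thickening (δ + δ) {x ∈ B | f x = 0} ⊆ N ∩ interior B)
    (hg : ∀ x ∈ B, g x = 0 → x ∈ thickening δ {x ∈ B | f x = 0}) :
    ψ '' {x ∈ interior B | g x = 0} = {x ∈ B | f x = 0} := by
  have hδ {x : X} : 0 < δ := dist_nonneg.trans_lt (hψ x)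
  refine Subset.antisymm ?_ fun z hz ↦ ?_
  · rintro _ ⟨x, ⟨hxB, hgx⟩, rfl⟩
    have hx := hg x (interior_subset hxB) hgx
    have hψx : ψ x ∈ thickening (δ + δ) {x ∈ B | f x = 0} :=
      thickening_thickening_subset δ δ _ (mem_thickening_iff.2 ⟨x, hx, hψ x⟩)
    have hxN := (hsub (thickening_mono (le_add_of_nonneg_left (hδ (x := x)).le) _ hx)).1
    exact ⟨interior_subset (hsub hψx).2, (hfg x hxN).trans hgx⟩
  · obtain ⟨x, rfl⟩ := ψ.surjective z
    have hx : x ∈ N ∩ interior B := hsub <| mem_thickening_iff.2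
      ⟨ψ x, hz, dist_comm x (ψ x) ▸ (hψ x).trans (lt_add_of_pos_left δ (hδ (x := x)))⟩
    exact ⟨x, ⟨hx.2, (hfg x hx.1).symm.trans hz.2⟩, rfl⟩

section RCLike

variable {𝕜 E F : Type*} [RCLike 𝕜] [NormedAddCommGroup E] [NormedSpace 𝕜 E]
  [NormedAddCommGroup F] [NormedSpace 𝕜 F]

theorem exists_openPartialHomeomorph_of_isCompact [CompleteSpace E] {Φ : E → F}
    {n : WithTop ℕ∞} {U K : Set E} (hΦ : ContDiffOn 𝕜 n Φ U) (hn : n ≠ 0) (hU : IsOpen U)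
    (hK : IsCompact K) (hKU : K ⊆ U) (hinj : InjOn Φ K)
    (hinv : ∀ x ∈ K, (fderiv 𝕜 Φ x).IsInvertible) :
    ∃ e : OpenPartialHomeomorph E F, ⇑e = Φ ∧ K ⊆ e.source ∧ e.source ⊆ U ∧
      ContDiffOn 𝕜 n e.symm e.target := by
  have hat {x : E} (hx : x ∈ U) : ContDiffAt 𝕜 n Φ x := hΦ.contDiffAt (hU.mem_nhds hx)
  have hstrict {x : E} (hx : x ∈ U) : HasStrictFDerivAt Φ (fderiv 𝕜 Φ x) x :=
    (hat hx).hasStrictFDerivAt hn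
  obtain ⟨t, ht, htinj⟩ : ∃ t ∈ 𝓝ˢ K, InjOn Φ t := by
    refine hinj.exists_mem_nhdsSet hK (fun x hx ↦ (hat (hKU hx)).continuousAt) fun x hx ↦ ?_
    obtain ⟨A, hA⟩ := hinv x hx
    have hA' : HasStrictFDerivAt Φ (A : E →L[𝕜] F) x := hA ▸ hstrict (hKU hx)
    exact ⟨_, (hA'.toOpenPartialHomeomorph Φ).open_source.mem_nhds
      hA'.mem_toOpenPartialHomeomorph_source, (hA'.toOpenPartialHomeomorph Φ).injOn⟩
  obtain ⟨s, hs, hKs, hst⟩ := mem_nhdsSet_iff_exists.1 ht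
  set W : Set E := s ∩ (U ∩ fderiv 𝕜 Φ ⁻¹' {L | L.IsInvertible})
  have hDΦ : ContinuousOn (fderiv 𝕜 Φ) U :=
    hΦ.continuousOn_fderiv_of_isOpen hU (ENat.one_le_iff_ne_zero_withTop.2 hn)
  have hW : IsOpen W := hs.inter (hDΦ.isOpen_inter_preimage hU ContinuousLinearEquiv.isOpen)
  have hWinj : InjOn Φ W := htinj.mono (inter_subset_left.trans hst)
  have hopen : IsOpenMap (W.domRestrict Φ) := by
    refine IsOpenMap.of_nhds_le fun x ↦ ?_
    obtain ⟨A, hA⟩ := x.2.2.2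
    have hA' : HasStrictFDerivAt Φ (A : E →L[𝕜] F) x := hA ▸ hstrict x.2.2.1
    rw [domRestrict_apply, ← hA'.map_nhds_eq_of_equiv,
      ← hW.isOpenEmbedding_subtypeVal.map_nhds_eq x, map_map]
    exact le_rfl
  let e := OpenPartialHomeomorph.ofContinuousOpenRestrict (hWinj.toPartialEquiv Φ W)
    (hΦ.continuousOn.mono fun x hx ↦ hx.2.1) hopen hW
  refine ⟨e, rfl, fun x hx ↦ ⟨hKs hx, hKU hx, hinv x hx⟩, fun x hx ↦ hx.2.1, fun y hy ↦ ?_⟩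
  have hmem : e.symm y ∈ W := e.map_target hy
  obtain ⟨A, hA⟩ := hmem.2.2
  have hA' : HasFDerivAt Φ (A : E →L[𝕜] F) (e.symm y) := hA ▸ (hstrict hmem.2.1).hasFDerivAt
  exact (e.contDiffAt_symm hy hA' (hat hmem.2.1)).contDiffWithinAt

theorem exists_diffeo_id_add_comp_graph [CompleteSpace E] {T : E × F → E} {V : Set (E × F)}
    {K : Set E} {n : WithTop ℕ∞} (hn : n ≠ 0) (hT : ContDiffOn 𝕜 n T V) (hV : IsOpen V)
    (hT0 : ∀ x, (x, 0) ∈ V → T (x, 0) = 0) (hK : IsCompact K) (hKV : ∀ x ∈ K, (x, 0) ∈ V)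
    (hTK : ∀ x ∉ K, ∀ v, T (x, v) = 0) {δ : ℝ} (hδ : 0 < δ) :
    ∃ ε > 0, ∀ h : E → F, ContDiff 𝕜 n h → (∀ x ∈ K, ‖h x‖ + ‖fderiv 𝕜 h x‖ < ε) →
      (∀ x ∈ K, (x, h x) ∈ V) ∧ ∃ ψ : E ≃ₜ E, (∀ x, ψ x = x + T (x, h x)) ∧
        ContDiff 𝕜 n ψ ∧ ContDiff 𝕜 n ψ.symm ∧ ∀ x, dist (ψ x) x < δ := by
  obtain ⟨ε, hε, hsmall⟩ := exists_forall_norm_comp_graph_lt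
    (hT.of_le (ENat.one_le_iff_ne_zero_withTop.2 hn)) hV hT0 hK hKV (δ := min δ (1 / 2))
    (by positivity)
  refine ⟨ε, hε, fun h hh hlt ↦ ?_⟩
  replace hsmall (x : E) (hx : x ∈ K) := hsmall h x hx (hh.differentiable hn x) (hlt x hx)
  have hoff {x : E} (hx : x ∉ K) : (fun y ↦ T (y, h y)) =ᶠ[𝓝 x] fun _ ↦ 0 := by
    filter_upwards [hK.isClosed.isOpen_compl.mem_nhds hx] with y hy using hTK y hy _
  have hP : ContDiff 𝕜 n fun x ↦ T (x, h x) := by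
    refine contDiff_iff_contDiffAt.2 fun x ↦ ?_
    by_cases hx : x ∈ K
    · exact (hT.contDiffAt (hV.mem_nhds (hsmall x hx).1)).comp x
        (contDiffAt_id.prodMk hh.contDiffAt)
    · exact contDiffAt_const.congr_of_eventuallyEq (hoff hx)
  have hlip : LipschitzWith (1 / 2) fun x ↦ T (x, h x) := by
    refine lipschitzWith_of_nnnorm_fderiv_le (𝕜 := 𝕜) (hP.differentiable hn) fun x ↦ ?_
    by_cases hx : x ∈ K
    · exact ((hsmall x hx).2.2.trans_le (min_le_right _ _)).le
    · simp [(hoff hx).fderiv_eq]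
  obtain ⟨ψ, hψ, hψn, hψsymm⟩ :=
    exists_homeomorph_id_add_of_lipschitzWith hP hn hlip (NNReal.half_lt_self one_ne_zero)
  refine ⟨fun x hx ↦ (hsmall x hx).1, ψ, hψ, hψn, hψsymm, fun x ↦ ?_⟩
  rw [hψ, dist_self_add_left]
  by_cases hx : x ∈ K
  · exact (hsmall x hx).2.1.trans_le (min_le_left _ _)
  · simpa [hTK x hx] using hδ

end RCLike

section Real

variable {E F G : Type*} [NormedAddCommGroup E] [NormedSpace ℝ E] [NormedAddCommGroup F]
  [NormedSpace ℝ F] [NormedAddCommGroup G] [NormedSpace ℝ G]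

theorem exists_contDiff_isInvertible_comp [FiniteDimensional ℝ E] [CompleteSpace F]
    {D : E → G →L[ℝ] F} {Z : Set E} (n : ℕ∞) (hD : ContinuousOn D Z) (hZ : IsClosed Z)
    (hinv : ∀ x ∈ Z, (D x).HasRightInverse) :
    ∃ A : E → F →L[ℝ] G, ContDiff ℝ n A ∧ ∀ x ∈ Z, (D x ∘L A x).IsInvertible := by
  -- The condition on `A x` below is open and convex, so a partition of unity glues local solutions.
  let t (x : E) : Set (F →L[ℝ] G) := {A | x ∈ Z → ‖D x ∘L A - .id ℝ F‖ < 1}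
  have hconvex (x : E) : Convex ℝ (t x) := by
    by_cases hx : x ∈ Z
    · simpa [t, hx, ball, dist_eq_norm, preimage] using (convex_ball (.id ℝ F) 1).linear_preimage
        ((ContinuousLinearMap.compL ℝ F G F (D x)).toLinearMap)
    · simpa [t, hx] using convex_univ
  have hlocal (x : E) : ∃ A, ∀ᶠ y in 𝓝 x, A ∈ t y := by
    by_cases hx : x ∈ Z
    · have hrinv : D x ∘L (hinv x hx).rightInverse = .id ℝ F :=
        ContinuousLinearMap.ext (hinv x hx).rightInverse_rightInverse
      have hcont : ContinuousWithinAt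
          (fun y ↦ ‖D y ∘L (hinv x hx).rightInverse - .id ℝ F‖) Z x :=
        (((hD x hx).clm_comp continuousWithinAt_const).sub continuousWithinAt_const).norm
      refine ⟨(hinv x hx).rightInverse, eventually_nhdsWithin_iff.1 ?_⟩
      exact hcont.tendsto.eventually_lt_const (by simp [hrinv])
    · refine ⟨0, ?_⟩
      filter_upwards [hZ.isOpen_compl.mem_nhds hx] with y hy hyZ using absurd hyZ hy
  obtain ⟨A, hA⟩ := exists_contMDiffMap_forall_mem_convex_of_local_const (n := n)
    (modelWithCornersSelf ℝ E) hconvex hlocal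
  exact ⟨A, A.contMDiff.contDiff, fun x hx ↦ isInvertible_of_norm_sub_id_lt_one (hA x hx)⟩

theorem exists_contDiffOn_add_eq_add [FiniteDimensional ℝ E] [CompleteSpace F]
    {f : E → F} {n : ℕ∞} {Z : Set E} (hf : ContDiff ℝ n f) (hn : n ≠ 0) (hZ : IsCompact Z)
    (hinv : ∀ x ∈ Z, (fderiv ℝ f x).HasRightInverse) :
    ∃ (H : E × F → E) (V : Set (E × F)), IsOpen V ∧ (∀ x ∈ Z, (x, 0) ∈ V) ∧ ContDiffOn ℝ n H V ∧
      (∀ p ∈ V, f (p.1 + H p) = f p.1 + p.2) ∧ ∀ x, (x, 0) ∈ V → H (x, 0) = 0 := by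
  have := FiniteDimensional.complete ℝ E
  have hn' : (n : WithTop ℕ∞) ≠ 0 := mod_cast hn
  obtain ⟨A, hA, hAinv⟩ := exists_contDiff_isInvertible_comp n
    (hf.continuous_fderiv hn').continuousOn hZ.isClosed hinv
  let Φ (p : E × F) : E × F := (p.1, f (p.1 + A p.1 p.2) - f p.1)
  have hΦ : ContDiff ℝ n Φ := by fun_prop
  have hΦ0 (x : E) : Φ (x, 0) = (x, 0) := by simp [Φ]
  have hΦinj : InjOn Φ (Z ×ˢ {0}) := by
    rintro ⟨x, _⟩ ⟨-, rfl⟩ ⟨y, _⟩ ⟨-, rfl⟩ hxy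
    simpa [hΦ0] using hxy
  have hΦinv : ∀ p ∈ Z ×ˢ {0}, (fderiv ℝ Φ p).IsInvertible := by
    rintro ⟨x, _⟩ ⟨hx, rfl⟩
    exact isInvertible_fderiv_shear (hf.differentiable hn' x) (hA.differentiable hn' x)
      (hAinv x hx)
  obtain ⟨e, he, hsource, -, hsymm⟩ := exists_openPartialHomeomorph_of_isCompact
    hΦ.contDiffOn hn' isOpen_univ (hZ.prod isCompact_singleton) (subset_univ _)
    hΦinj hΦinv
  refine ⟨fun p ↦ A p.1 (e.symm p).2, e.target ∩ {p | (p.1, 0) ∈ e.source}, ?_, ?_, ?_, ?_, ?_⟩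
  · exact e.open_target.inter (e.open_source.preimage (by fun_prop))
  · intro x hx
    have hxs : (x, (0 : F)) ∈ e.source := hsource ⟨hx, rfl⟩
    refine ⟨?_, hxs⟩
    simpa [he, hΦ0] using e.map_source hxs
  · exact (hA.comp contDiff_fst).contDiffOn.clm_apply
      (contDiff_snd.comp_contDiffOn (hsymm.mono inter_subset_left))
  · rintro ⟨x, v⟩ ⟨hp, -⟩
    have hright : Φ (e.symm (x, v)) = (x, v) := he ▸ e.right_inv hp
    obtain ⟨hfst, hsnd⟩ := Prod.ext_iff.1 hright
    simp only [Φ] at hfst hsnd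
    rw [hfst] at hsnd
    simpa [sub_eq_iff_eq_add'] using hsnd
  · rintro x ⟨-, hx⟩
    have hleft := e.left_inv hx
    simp only [he, hΦ0] at hleft
    simp [hleft]

theorem exists_diffeo_comp_eq_of_norm_sub_lt [FiniteDimensional ℝ E] [CompleteSpace F]
    {f : E → F} {n : ℕ∞} {B Z : Set E} (hf : ContDiff ℝ n f) (hn : n ≠ 0) (hZ : IsCompact Z)
    (hZB : Z ⊆ interior B) (hinv : ∀ x ∈ Z, (fderiv ℝ f x).HasRightInverse) :
    ∃ N, IsOpen N ∧ Z ⊆ N ∧ ∀ δ > 0, ∃ ε > 0, ∀ g : E → F, ContDiff ℝ n g →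
      (∀ x ∈ B, ‖g x - f x‖ + ‖fderiv ℝ g x - fderiv ℝ f x‖ < ε) →
      ∃ ψ : E ≃ₜ E, ContDiff ℝ n ψ ∧ ContDiff ℝ n ψ.symm ∧ (∀ x, dist (ψ x) x < δ) ∧
        ∀ x ∈ N, f (ψ x) = g x := by
  have := FiniteDimensional.complete ℝ E
  have hn' : (n : WithTop ℕ∞) ≠ 0 := mod_cast hn
  obtain ⟨H, V, hV, hZV, hH, hfH, hH0⟩ := exists_contDiffOn_add_eq_add hf hn hZ hinv
  obtain ⟨K, hK, hZK, hKsub⟩ := exists_compact_between hZ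
    (isOpen_interior.inter (hV.preimage (Continuous.prodMk_left (0 : F)))) (subset_inter hZB hZV)
  obtain ⟨χ, hχ1, hχ0, -⟩ := exists_contMDiffMap_one_nhds_of_subset_interior (n := n)
    (modelWithCornersSelf ℝ E) hZ.isClosed hZK
  obtain ⟨N, hN, hZN, hχN⟩ := mem_nhdsSet_iff_exists.1 hχ1
  refine ⟨N, hN, hZN, fun δ hδ ↦ ?_⟩
  obtain ⟨ε, hε, hdiffeo⟩ := exists_diffeo_id_add_comp_graph (T := fun p ↦ χ p.1 • H p) hn'
    ((χ.contMDiff.contDiff.comp contDiff_fst).contDiffOn.smul hH) hV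
    (fun x hx ↦ by simp [hH0 x hx]) hK (fun x hx ↦ (hKsub hx).2)
    (fun x hx v ↦ by simp [hχ0 x hx]) hδ
  refine ⟨ε, hε, fun g hg hgf ↦ ?_⟩
  obtain ⟨hmem, ψ, hψ, hψn, hψsymm, hdist⟩ := hdiffeo (g - f) (hg.sub hf) fun x hx ↦ by
    rw [fderiv_sub (hg.differentiable hn' x) (hf.differentiable hn' x)]
    exact hgf x (interior_subset (hKsub hx).1)
  refine ⟨ψ, hψn, hψsymm, hdist, fun x hx ↦ ?_⟩
  have hχx : χ x = 1 := hχN hx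
  have hxK : x ∈ K := by
    by_contra hxK
    exact one_ne_zero (hχx.symm.trans (hχ0 x hxK))
  rw [hψ, hχx, one_smul, hfH _ (hmem x hxK), Pi.sub_apply, add_sub_cancel]

theorem thom_stability_general [FiniteDimensional ℝ E] [FiniteDimensional ℝ F] {f : E → F}
    {n : ℕ∞} {B : Set E} (hf : ContDiff ℝ n f) (hn : n ≠ 0) (hB : IsCompact B)
    (htrans : ∀ x ∈ B, f x = 0 → Surjective (fderiv ℝ f x))
    (hZB : {x ∈ B | f x = 0} ⊆ interior B) :
    ∃ ε > 0, ∀ g : E → F, ContDiff ℝ n g →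
      (∀ x ∈ B, ‖g x - f x‖ + ‖fderiv ℝ g x - fderiv ℝ f x‖ < ε) →
      (∀ x ∈ interior B, g x = 0 → Surjective (fderiv ℝ g x)) ∧
      ∃ φ : E ≃ₜ E, ContDiff ℝ n φ ∧ ContDiff ℝ n φ.symm ∧
        φ '' {x ∈ B | f x = 0} = {x ∈ interior B | g x = 0} := by
  have hn' : (n : WithTop ℕ∞) ≠ 0 := mod_cast hn
  set Z : Set E := {x ∈ B | f x = 0}
  have := FiniteDimensional.complete ℝ F
  have hZ : IsCompact Z := hB.inter_right (isClosed_singleton.preimage hf.continuous)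
  obtain ⟨N, hN, hZN, hdiffeo⟩ := exists_diffeo_comp_eq_of_norm_sub_lt hf hn hZ hZB fun x hx ↦
    .of_surjective_of_finiteDimensional (htrans x hx.1 hx.2)
  obtain ⟨δ, hδ, hδN⟩ := hZ.exists_thickening_subset_open (hN.inter isOpen_interior)
    (subset_inter hZN hZB)
  obtain ⟨ε, hε, hdiffeo⟩ := hdiffeo (δ / 2) (half_pos hδ)
  obtain ⟨c, hc, hfc⟩ := exists_pos_forall_mem_of_norm_lt (U := thickening (δ / 2) Z) hB
    hf.continuous.continuousOn isOpen_thickening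
    fun x hx hfx ↦ self_subset_thickening (half_pos hδ) Z ⟨hx, hfx⟩
  refine ⟨min c ε, lt_min hc hε, fun g hg hgf ↦ ?_⟩
  obtain ⟨ψ, hψ, hψsymm, hdist, hfg⟩ := hdiffeo g hg fun x hx ↦
    (hgf x hx).trans_le (min_le_right _ _)
  have hgZ (x : E) (hx : x ∈ B) (hgx : g x = 0) : x ∈ thickening (δ / 2) Z := by
    have hgfx := (hgf x hx).trans_le (min_le_left _ _)
    rw [hgx, zero_sub, norm_neg] at hgfx
    exact hfc x hx ((le_add_of_nonneg_right (norm_nonneg _)).trans_lt hgfx)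
  have himage : ψ '' {x ∈ interior B | g x = 0} = Z :=
    image_setOf_eq_zero_of_dist_lt ψ.toEquiv hdist hfg (by rwa [add_halves]) hgZ
  refine ⟨fun x hx hgx ↦ ?_, ψ.symm, hψsymm, hψ, himage ▸ ψ.symm_image_image _⟩
  have hψx : ψ x ∈ Z := himage ▸ mem_image_of_mem ψ ⟨hx, hgx⟩
  have hxN : x ∈ N :=
    (hδN (thickening_mono (half_le_self hδ.le) Z (hgZ x (interior_subset hx) hgx))).1
  exact surjective_fderiv_of_comp_homeomorph_eventuallyEq (hg.differentiable hn' x)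
    (hψsymm.differentiable hn' _) (by filter_upwards [hN.mem_nhds hxN] using hfg)
    (htrans _ hψx.1 hψx.2)

end Real

/-- Thom isotopy / stability: if `f : ℝ^n → ℝ^r` is smooth, vanishes transversally, and
its zero set `Z` inside the closed ball `B̄(0,R)` is compact and contained in the open
ball, then any `g` sufficiently `C¹`-close to `f` on `B̄(0,R)` also vanishes
transversally on `B(0,R)` and its zero set there is diffeomorphic to `Z` (indeed by an
ambient diffeomorphism of `ℝ^n`). -/
theorem thom_stability (n r : ℕ) (R : ℝ) (hR : 0 < R)
    (f : EuclideanSpace ℝ (Fin n) → EuclideanSpace ℝ (Fin r))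
    (hf : ContDiff ℝ (⊤ : ℕ∞) f)
    (htrans : ∀ x ∈ closedBall (0 : EuclideanSpace ℝ (Fin n)) R, f x = 0 →
      Function.Surjective (fderiv ℝ f x))
    (Z : Set (EuclideanSpace ℝ (Fin n)))
    (hZ : Z = {x ∈ closedBall (0 : EuclideanSpace ℝ (Fin n)) R | f x = 0})
    (hZsub : Z ⊆ ball (0 : EuclideanSpace ℝ (Fin n)) R) :
    ∃ ε > (0 : ℝ), ∀ g : EuclideanSpace ℝ (Fin n) → EuclideanSpace ℝ (Fin r),
      ContDiff ℝ (⊤ : ℕ∞) g →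
      (∀ x ∈ closedBall (0 : EuclideanSpace ℝ (Fin n)) R,
        ‖g x - f x‖ + ‖fderiv ℝ g x - fderiv ℝ f x‖ < ε) →
      (∀ x ∈ ball (0 : EuclideanSpace ℝ (Fin n)) R, g x = 0 →
        Function.Surjective (fderiv ℝ g x)) ∧
      ∃ φ : EuclideanSpace ℝ (Fin n) ≃ₜ EuclideanSpace ℝ (Fin n),
        ContDiff ℝ (⊤ : ℕ∞) φ ∧ ContDiff ℝ (⊤ : ℕ∞) φ.symm ∧
        φ '' Z = {x ∈ ball (0 : EuclideanSpace ℝ (Fin n)) R | g x = 0} := by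
  have hinterior := interior_closedBall (0 : EuclideanSpace ℝ (Fin n)) hR.ne'
  subst hZ
  simpa only [hinterior] using
    thom_stability_general hf (by simp) (isCompact_closedBall _ _) htrans (hinterior ▸ hZsub)
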